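/- Let d be a positive integer, let m_1,…,m_d and u_1,…,u_{d−1} be non-negative integers, and set s := (m_1+2, {1}_{u_1}, …, m_{d−1}+2, {1}_{u_{d−1}}, m_d+2), a tuple of length ‖s‖ with weight |s|. Let a ∈ [−1, 1/3] and p ∈ [1/2, 3/2] with p ≠ 1 and |a| ≤ min(1, 2/p − 1). Then Li*_{{1}_{|s|}}( ⊔_{i=1}^{d−1}{1−p, {1}_{m_i}, 1/(1−p), {1}_{u_i}}, 1−p, {1}_{m_d}, 1 + ap/(1−p) ) = Li*_s({1}_{‖s‖−1}, a) − Li*_s({1}_{‖s‖−1}, 1 − 1/p). -/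

import Mathlib

/-- One-dimensional polylogarithm `Li_s(x) = ∑_{n≥1} x^n/n^s`. -/
noncomputable def Li (s : ℕ) (x : ℝ) : ℝ := ∑' n : ℕ, x ^ (n + 1) / (n + 1 : ℝ) ^ s

/-- Multiple polylogarithm
`Li*_{s₁,…,s_d}(x₁,…,x_d) = ∑_{n₁ ≥ ⋯ ≥ n_d ≥ 1} ∏ᵢ xᵢ^{nᵢ}/nᵢ^{sᵢ}`. -/
noncomputable def LiStar (s : List ℕ) (x : List ℝ) : ℝ :=
  ∑' m : {m : Fin s.length → ℕ // (∀ i j : Fin s.length, i ≤ j → m j ≤ m i) ∧ ∀ i, 1 ≤ m i},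
    ∏ i : Fin s.length, x.getD (i : ℕ) 0 ^ m.1 i / (m.1 i : ℝ) ^ s.get i

/-- The exponent tuple `s = (m₁+2, {1}_{u₁}, …, m_d+2, {1}_{u_d}, m_{d+1}+2)`
(here `d+1` plays the role of the paper's `d ≥ 1`). -/
def sTup (d : ℕ) (m : Fin (d + 1) → ℕ) (u : Fin d → ℕ) : List ℕ :=
  (List.ofFn fun i : Fin d => (m i.castSucc + 2) :: List.replicate (u i) 1).flatten ++
    [m (Fin.last d) + 2]

/-- The argument prefix `⊔_{i=1}^{d}{1−p, {1}_{mᵢ}, 1/(1−p), {1}_{uᵢ}}`. -/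
noncomputable def xPre (d : ℕ) (m : Fin (d + 1) → ℕ) (u : Fin d → ℕ) (p : ℝ) : List ℝ :=
  (List.ofFn fun i : Fin d =>
    (1 - p) :: (List.replicate (m i.castSucc) (1 : ℝ) ++
      (1 / (1 - p)) :: List.replicate (u i) (1 : ℝ))).flatten

open Finset Filter Topology

/-- averaging operator on coefficient sequences -/
noncomputable def Op (r : ℝ) (C : ℕ → ℝ) (n : ℕ) : ℝ :=
  (∑ k ∈ Icc 1 n, r ^ (n - k) * C k) / n

noncomputable def Cf (r e : ℝ) : List Bool → ℕ → ℝ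
  | [] => fun n => e ^ n / n
  | true :: w => Op r (Cf r e w)
  | false :: w => Op 1 (Cf r e w)

noncomputable def Fs (C : ℕ → ℝ) (t : ℝ) : ℝ := ∑' n, C n * t ^ n

lemma Cf_zero (r e : ℝ) (w : List Bool) : Cf r e w 0 = 0 := by
  rcases w with _ | ⟨_ | _, w⟩ <;> simp [Cf, Op]

lemma sum_inv_sqrt (n : ℕ) : ∑ k ∈ Icc 1 n, 1 / √(k : ℝ) ≤ 2 * √n := by
  induction n with
  | zero => simp
  | succ n ih =>
    rw [Finset.sum_Icc_succ_top (by omega)]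
    have h1 : 0 < √((n + 1 : ℕ) : ℝ) := Real.sqrt_pos.2 (by positivity)
    have h2 : √((n + 1 : ℕ) : ℝ) ^ 2 = n + 1 := by rw [Real.sq_sqrt (by positivity)]; push_cast; ring
    have h3 : √(n : ℝ) ^ 2 = n := by rw [Real.sq_sqrt (by positivity)]
    have h4 : 0 ≤ √(n : ℝ) := Real.sqrt_nonneg _
    have : 1 / √((n + 1 : ℕ) : ℝ) ≤ 2 * √((n + 1 : ℕ) : ℝ) - 2 * √n := by
      rw [div_le_iff₀ h1]
      nlinarith [sq_nonneg (√((n + 1 : ℕ) : ℝ) - √n)]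
    linarith

lemma sum_geo_sqrt (r : ℝ) (hr0 : 0 ≤ r) (hr : r ≤ 1 / 2) (n : ℕ) (hn : 1 ≤ n) :
    ∑ k ∈ Icc 1 n, r ^ (n - k) * (1 / √(k : ℝ)) ≤ 4 / √n := by
  induction n, hn using Nat.le_induction with
  | base => norm_num
  | succ n hn ih =>
    rw [Finset.sum_Icc_succ_top (by omega)]
    have e : ∑ k ∈ Icc 1 n, r ^ (n + 1 - k) * (1 / √(k : ℝ)) =
        r * ∑ k ∈ Icc 1 n, r ^ (n - k) * (1 / √(k : ℝ)) := by
      rw [Finset.mul_sum]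
      refine Finset.sum_congr rfl fun k hk => ?_
      rw [Nat.succ_sub (Finset.mem_Icc.1 hk).2, pow_succ]; ring
    rw [e]
    have hn' : (1 : ℝ) ≤ n := by exact_mod_cast hn
    have h1 : 0 < √((n + 1 : ℕ) : ℝ) := Real.sqrt_pos.2 (by positivity)
    have h5 : 0 < √(n : ℝ) := Real.sqrt_pos.2 (by positivity)
    have h6 : 2 * √((n + 1 : ℕ) : ℝ) ≤ 3 * √(n : ℝ) := by
      have h2 : √((n + 1 : ℕ) : ℝ) ^ 2 = n + 1 := by
        rw [Real.sq_sqrt (by positivity)]; push_cast; ring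
      have h3 : √(n : ℝ) ^ 2 = n := by rw [Real.sq_sqrt (by positivity)]
      exact abs_le_of_sq_le_sq' (by nlinarith) (by positivity) |>.2
    have h7 : r * ∑ k ∈ Icc 1 n, r ^ (n - k) * (1 / √(k : ℝ)) ≤ 1 / 2 * (4 / √n) := by
      apply mul_le_mul hr ih _ (by norm_num)
      exact Finset.sum_nonneg fun k _ => by positivity
    have h8 : 1 / 2 * (4 / √(n : ℝ)) ≤ 3 / √((n + 1 : ℕ) : ℝ) := by
      rw [← mul_div_assoc, div_le_div_iff₀ h5 h1]; linarith
    have h9 : r ^ (n + 1 - (n + 1)) * (1 / √((n + 1 : ℕ) : ℝ)) = 1 / √((n + 1 : ℕ) : ℝ) := by simp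
    rw [h9]
    calc _ ≤ 3 / √((n + 1 : ℕ) : ℝ) + 1 / √((n + 1 : ℕ) : ℝ) := by linarith
      _ = _ := by ring

lemma Op_bound_one (r K : ℝ) (hr : |r| ≤ 1) (hK : 0 ≤ K) (C : ℕ → ℝ)
    (h : ∀ n, 1 ≤ n → |C n| ≤ K / √n) (n : ℕ) (hn : 1 ≤ n) : |Op r C n| ≤ 2 * K / √n := by
  have hn' : (0 : ℝ) < n := by exact_mod_cast hn
  unfold Op
  rw [abs_div, Nat.abs_cast, div_le_iff₀ hn']
  calc _ ≤ ∑ k ∈ Icc 1 n, K * (1 / √(k : ℝ)) := by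
        refine (Finset.abs_sum_le_sum_abs _ _).trans (Finset.sum_le_sum fun k hk => ?_)
        rw [abs_mul, abs_pow]
        have := h k (Finset.mem_Icc.1 hk).1
        have h2 : |r| ^ (n - k) ≤ 1 := pow_le_one₀ (abs_nonneg _) hr
        rw [mul_one_div]
        calc _ ≤ 1 * |C k| := by gcongr
          _ ≤ _ := by linarith
    _ ≤ K * (2 * √n) := by rw [← Finset.mul_sum]; gcongr; exact sum_inv_sqrt n
    _ = _ := by
      have h3 : √(n : ℝ) * √n = n := Real.mul_self_sqrt hn'.le
      have h5 : 0 < √(n : ℝ) := Real.sqrt_pos.2 (by positivity)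
      field_simp
      rw [pow_two, h3]

lemma Op_bound_half (r K : ℝ) (hr : |r| ≤ 1 / 2) (hK : 0 ≤ K) (C : ℕ → ℝ)
    (h : ∀ n, 1 ≤ n → |C n| ≤ K / √n) (n : ℕ) (hn : 1 ≤ n) :
    |Op r C n| ≤ 4 * K * (1 / (n * √n)) := by
  have hn' : (0 : ℝ) < n := by exact_mod_cast hn
  have h5 : 0 < √(n : ℝ) := Real.sqrt_pos.2 (by positivity)
  unfold Op
  rw [abs_div, Nat.abs_cast, div_le_iff₀ hn']
  calc _ ≤ ∑ k ∈ Icc 1 n, K * (|r| ^ (n - k) * (1 / √(k : ℝ))) := by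
        refine (Finset.abs_sum_le_sum_abs _ _).trans (Finset.sum_le_sum fun k hk => ?_)
        rw [abs_mul, abs_pow]
        have := h k (Finset.mem_Icc.1 hk).1
        calc _ ≤ |r| ^ (n - k) * (K / √k) := by gcongr
          _ = _ := by ring
    _ ≤ K * (4 / √n) := by
        rw [← Finset.mul_sum]; gcongr; exact sum_geo_sqrt |r| (abs_nonneg _) hr n hn
    _ = _ := by field_simp

lemma Cf_bound (r e : ℝ) (hr : |r| ≤ 1 / 2) (he : |e| ≤ 1) (w : List Bool) :
    ∃ K, 0 ≤ K ∧ ∀ n, 1 ≤ n → |Cf r e w n| ≤ K / √n := by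
  induction w with
  | nil =>
    refine ⟨1, by norm_num, fun n hn => ?_⟩
    have hn' : (1 : ℝ) ≤ n := by exact_mod_cast hn
    have h5 : 0 < √(n : ℝ) := Real.sqrt_pos.2 (by positivity)
    simp only [Cf, abs_div, abs_pow, Nat.abs_cast]
    have h2 : |e| ^ n ≤ 1 := pow_le_one₀ (abs_nonneg _) he
    have : √(n : ℝ) ≤ n := by rw [Real.sqrt_le_left (by positivity)]; nlinarith
    gcongr
  | cons c w ih =>
    obtain ⟨K, hK, h⟩ := ih
    refine ⟨2 * K, by positivity, ?_⟩
    cases c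
    · exact Op_bound_one 1 K (by simp) hK _ h
    · exact Op_bound_one r K (by linarith) hK _ h

lemma Cf_bdd (r e : ℝ) (hr : |r| ≤ 1 / 2) (he : |e| ≤ 1) (w : List Bool) :
    ∃ K, 0 ≤ K ∧ ∀ n, |Cf r e w n| ≤ K := by
  obtain ⟨K, hK, h⟩ := Cf_bound r e hr he w
  refine ⟨K, hK, fun n => ?_⟩
  rcases Nat.eq_zero_or_pos n with rfl | hn
  · simpa [Cf_zero] using hK
  · refine (h n hn).trans (div_le_self hK ?_)
    rw [Real.one_le_sqrt]; exact_mod_cast hn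

lemma Cf_summable (r e : ℝ) (hr : |r| ≤ 1 / 2) (he : |e| ≤ 1) (w : List Bool) :
    Summable (fun n => |Cf r e (true :: w) n|) := by
  obtain ⟨K, hK, h⟩ := Cf_bound r e hr he w
  have hs : Summable (fun n : ℕ => 4 * K * (1 / (n * √(n : ℝ)))) := by
    apply Summable.mul_left
    refine (Real.summable_one_div_nat_rpow (p := 3 / 2) |>.2 (by norm_num)).congr fun n => ?_
    rcases Nat.eq_zero_or_pos n with rfl | hn
    · norm_num
    · rw [Real.sqrt_eq_rpow, ← Real.rpow_one_add' (by positivity) (by norm_num)]; norm_num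
  refine Summable.of_nonneg_of_le (fun _ => abs_nonneg _) (fun n => ?_) hs
  rcases Nat.eq_zero_or_pos n with rfl | hn
  · simp [Cf_zero]
  · exact Op_bound_half r K hr hK _ h n hn

lemma Fs_summable (C : ℕ → ℝ) (K : ℝ) (h : ∀ n, |C n| ≤ K) (t : ℝ) (ht : |t| < 1) :
    Summable (fun n => C n * t ^ n) := by
  refine Summable.of_norm_bounded (g := fun n => K * |t| ^ n)
    ((summable_geometric_of_lt_one (abs_nonneg _) ht).mul_left K) fun n => ?_
  rw [Real.norm_eq_abs, abs_mul, abs_pow]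
  gcongr; exact h n

lemma Fs_deriv (C : ℕ → ℝ) (K : ℝ) (h : ∀ n, |C n| ≤ K) (t : ℝ) (ht : |t| < 1) :
    HasDerivAt (Fs C) (∑' n, C n * (n * t ^ (n - 1))) t := by
  obtain ⟨ρ, h1, h2⟩ := exists_between ht
  have hρ : 0 < ρ := (abs_nonneg _).trans_lt h1
  have hu : Summable (fun n : ℕ => K * (n * ρ ^ (n - 1))) := by
    apply Summable.mul_left
    have := summable_pow_mul_geometric_of_norm_lt_one 1 (r := ρ) (by
      rw [Real.norm_eq_abs, abs_of_pos hρ]; exact h2)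
    refine (this.mul_left (1 / ρ)).congr fun n => ?_
    rcases n with _ | n
    · simp
    · simp [pow_succ]; field_simp
  refine hasDerivAt_tsum_of_isPreconnected (t := Metric.ball 0 ρ) (y₀ := 0)
    (g := fun n y => C n * y ^ n) (g' := fun n y => C n * (n * y ^ (n - 1)))
    hu Metric.isOpen_ball
    (convex_ball 0 ρ).isPreconnected (fun n y _ => (hasDerivAt_pow n y).const_mul _)
    (fun n y hy => ?_) (by simpa using hρ) ?_ (by simpa using h1)
  · rw [Real.norm_eq_abs, abs_mul, abs_mul, abs_pow, Nat.abs_cast]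
    have : |y| ≤ ρ := by simpa using (Metric.mem_ball.1 hy).le
    have hK : 0 ≤ K := (abs_nonneg _).trans (h 0)
    gcongr
    exact h n
  · exact Fs_summable C K h 0 (by simp)

lemma Op_deriv (r : ℝ) (hr : |r| ≤ 1) (C : ℕ → ℝ) (K K' : ℝ) (h : ∀ n, |C n| ≤ K) (h0 : C 0 = 0)
    (h' : ∀ n, |Op r C n| ≤ K') (t : ℝ) (ht0 : t ≠ 0) (ht : |t| < 1) :
    HasDerivAt (Fs (Op r C)) (Fs C t / (t * (1 - r * t))) t := by
  have hd := Fs_deriv _ K' h' t ht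
  have hrt : 1 - r * t ≠ 0 := by
    have : |r * t| < 1 := by rw [abs_mul]; nlinarith [abs_nonneg r, abs_nonneg t]
    linarith [le_abs_self (r * t), (abs_lt.1 this).2] |> fun (h : 0 < 1 - r * t) => h.ne'
  convert hd using 1
  rw [div_eq_iff (mul_ne_zero ht0 hrt)]
  set S : ℕ → ℝ := fun n => ∑ k ∈ Icc 1 n, r ^ (n - k) * C k with hS
  have hS0 : S 0 = 0 := by simp [hS]
  have hSs : ∀ n, S (n + 1) = r * S n + C (n + 1) := by
    intro n
    simp only [hS]
    rw [Finset.sum_Icc_succ_top (by omega), Finset.mul_sum]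
    congr 1
    · refine Finset.sum_congr rfl fun k hk => ?_
      rw [Nat.succ_sub (Finset.mem_Icc.1 hk).2, pow_succ]; ring
    · simp
  have hOS : ∀ n, Op r C n * n = S n := by
    intro n
    rcases Nat.eq_zero_or_pos n with rfl | hn
    · simp [hS0]
    · have : (n : ℝ) ≠ 0 := by positivity
      simp only [Op, hS]; field_simp
  have e1 : (∑' n, Op r C n * (n * t ^ (n - 1))) * t = ∑' n, S n * t ^ n := by
    rw [← tsum_mul_right]
    refine tsum_congr fun n => ?_
    rw [← hOS]
    rcases n with _ | n
    · simp
    · simp [pow_succ]; ring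
  have hsum : Summable (fun n => S n * t ^ n) := by
    have := (summable_pow_mul_geometric_of_norm_lt_one 1 (r := |t|) (by simpa using ht)).mul_left K'
    refine Summable.of_norm_bounded this fun n => ?_
    rw [Real.norm_eq_abs, ← hOS, abs_mul, abs_mul, abs_pow, Nat.abs_cast, pow_one, mul_assoc]
    gcongr; exact h' n
  have e2 : ∑' n, S n * t ^ n = r * t * ∑' n, S n * t ^ n + Fs C t := by
    have hC := Fs_summable C K h t ht
    conv_lhs => rw [hsum.tsum_eq_zero_add]
    unfold Fs
    conv_rhs => rw [hC.tsum_eq_zero_add]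
    rw [hS0, h0, ← tsum_mul_left, zero_mul, zero_add, zero_add,
      ← (hsum.mul_left (r * t)).tsum_add ((summable_nat_add_iff 1).2 hC)]
    refine tsum_congr fun n => ?_
    rw [hSs]; ring
  rw [← mul_assoc, e1]; linarith

lemma Cf_cons_deriv (r e : ℝ) (hr : |r| ≤ 1 / 2) (he : |e| ≤ 1) (c : Bool) (w : List Bool)
    (t : ℝ) (ht0 : t ≠ 0) (ht : |t| < 1) :
    HasDerivAt (Fs (Cf r e (c :: w)))
      (Fs (Cf r e w) t / (t * (1 - (if c then r else 1) * t))) t := by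
  obtain ⟨K, _, h⟩ := Cf_bdd r e hr he w
  obtain ⟨K', _, h'⟩ := Cf_bdd r e hr he (c :: w)
  cases c
  · exact Op_deriv 1 (by simp) _ K K' h (Cf_zero _ _ _) h' t ht0 ht
  · exact Op_deriv r (by linarith) _ K K' h (Cf_zero _ _ _) h' t ht0 ht

lemma Fs_nil (r e : ℝ) (he : |e| ≤ 1) (t : ℝ) (ht : |t| < 1) :
    Fs (Cf r e []) t = - Real.log (1 - e * t) := by
  have h : |e * t| < 1 := by rw [abs_mul]; nlinarith [abs_nonneg e, abs_nonneg t]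
  have := (Real.hasSum_pow_div_log_of_abs_lt_one h).tsum_eq
  rw [← this]
  unfold Fs
  rw [Summable.tsum_eq_zero_add]
  · simp only [Cf, Nat.cast_zero, div_zero, zero_mul, zero_add]
    refine tsum_congr fun n => ?_
    rw [mul_pow]; push_cast; ring
  · exact Fs_summable _ 1 (fun n => by
      simp only [Cf, abs_div, abs_pow, Nat.abs_cast]
      rcases Nat.eq_zero_or_pos n with rfl | hn
      · simp
      · have hn' : (1 : ℝ) ≤ n := by exact_mod_cast hn
        exact div_le_one_of_le₀ ((pow_le_one₀ (abs_nonneg _) he).trans hn') (by positivity)) t ht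

lemma Fs_zero (C : ℕ → ℝ) (h0 : C 0 = 0) : Fs C 0 = 0 := by
  unfold Fs
  rw [← tsum_zero (α := ℝ) (β := ℕ)]
  refine tsum_congr fun n => ?_
  rcases n with _ | n <;> simp [h0]

lemma tau_facts (p : ℝ) (hp : p ∈ Set.Icc (1 / 2 : ℝ) (3 / 2)) (z : ℝ) (hz : 0 ≤ z) (hz1 : z < 1) :
    0 < p + (1 - p) * z ∧ |z / (p + (1 - p) * z)| < 1 := by
  obtain ⟨h1, h2⟩ := hp
  have h : 0 < p + (1 - p) * z := by nlinarith
  refine ⟨h, ?_⟩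
  rw [abs_of_nonneg (by positivity), div_lt_one h]; nlinarith

lemma main_interior (a p : ℝ) (hp : p ∈ Set.Icc (1 / 2 : ℝ) (3 / 2)) (ha : |a| ≤ 1)
    (he : |1 - p + a * p| ≤ 1) (hb : |1 - 1 / p| ≤ 1) (w : List Bool) :
    ∀ z, 0 ≤ z → z < 1 → Fs (Cf (1 - p) (1 - p + a * p) w) (z / (p + (1 - p) * z)) =
      Fs (Cf 0 a w) z - Fs (Cf 0 (1 - 1 / p) w) z := by
  have hq : |1 - p| ≤ 1 / 2 := abs_le.2 ⟨by linarith [hp.2], by linarith [hp.1]⟩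
  have hp0 : 0 < p := by linarith [hp.1]
  have h00 : |(0 : ℝ)| ≤ 1 / 2 := by norm_num
  induction w with
  | nil =>
    intro z hz hz1
    obtain ⟨h1, h2⟩ := tau_facts p hp z hz hz1
    have hzz : |z| < 1 := by rwa [abs_of_nonneg hz]
    rw [Fs_nil _ _ he _ h2, Fs_nil _ _ ha _ hzz, Fs_nil _ _ hb _ hzz]
    have h3 : 0 < 1 - a * z := by nlinarith [abs_le.1 ha]
    have h4 : 0 < 1 - (1 - 1 / p) * z := by nlinarith [abs_le.1 hb]
    have : 1 - (1 - p + a * p) * (z / (p + (1 - p) * z)) = (1 - a * z) / (1 - (1 - 1 / p) * z) := by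
      rw [eq_div_iff h4.ne']
      field_simp
      ring
    rw [this, Real.log_div h3.ne' h4.ne']; ring
  | cons c w ih =>
    intro z hz hz1
    rcases hz.eq_or_lt with rfl | hz
    · simp [Fs_zero _ (Cf_zero _ _ _)]
    set H : ℝ → ℝ := fun z => Fs (Cf (1 - p) (1 - p + a * p) (c :: w)) (z / (p + (1 - p) * z)) -
      (Fs (Cf 0 a (c :: w)) z - Fs (Cf 0 (1 - 1 / p) (c :: w)) z) with hH
    have hH0 : H 0 = 0 := by simp [hH, Fs_zero _ (Cf_zero _ _ _)]
    have hτ : ∀ x, 0 ≤ x → x < 1 → HasDerivAt (fun z => z / (p + (1 - p) * z))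
        (p / (p + (1 - p) * x) ^ 2) x := by
      intro x hx hx1
      obtain ⟨h1, h2⟩ := tau_facts p hp x hx hx1
      have := (hasDerivAt_id x).div (((hasDerivAt_id x).const_mul (1 - p)).const_add p) h1.ne'
      refine this.congr_deriv ?_
      simp only [id]; congr 1; ring
    have hc : ContinuousOn H (Set.Icc 0 z) := by
      intro x hx
      have hx1 : x < 1 := hx.2.trans_lt hz1
      obtain ⟨h1, h2⟩ := tau_facts p hp x hx.1 hx1
      have hxx : |x| < 1 := by rwa [abs_of_nonneg hx.1]
      obtain ⟨K1, _, k1⟩ := Cf_bdd (1 - p) (1 - p + a * p) hq he (c :: w)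
      obtain ⟨K2, _, k2⟩ := Cf_bdd 0 a h00 ha (c :: w)
      obtain ⟨K3, _, k3⟩ := Cf_bdd 0 (1 - 1 / p) h00 hb (c :: w)
      have d1 := (Fs_deriv _ K1 k1 _ h2).comp x (hτ x hx.1 hx1)
      exact (d1.sub ((Fs_deriv _ K2 k2 _ hxx).sub
        (Fs_deriv _ K3 k3 _ hxx))).continuousAt.continuousWithinAt
    have hd : ∀ x ∈ Set.Ioo 0 z, HasDerivAt H 0 x := by
      intro x hx
      have hx1 : x < 1 := hx.2.trans hz1
      obtain ⟨h1, h2⟩ := tau_facts p hp x hx.1.le hx1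
      have hxx : |x| < 1 := by rwa [abs_of_nonneg hx.1.le]
      have hx0 : x ≠ 0 := hx.1.ne'
      have d1 := (Cf_cons_deriv (1 - p) (1 - p + a * p) hq he c w _
        (div_ne_zero hx0 h1.ne') h2).comp x (hτ x hx.1.le hx1)
      have d2 := Cf_cons_deriv 0 a h00 ha c w x hx0 hxx
      have d3 := Cf_cons_deriv 0 (1 - 1 / p) h00 hb c w x hx0 hxx
      refine (d1.sub (d2.sub d3)).congr_deriv ?_
      rw [ih x hx.1.le hx1]
      have hx2 : 1 - x ≠ 0 := by linarith
      have h1' : p + (1 - p) * x ≠ 0 := h1.ne'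
      generalize Fs (Cf 0 a w) x = A1
      generalize Fs (Cf 0 (1 - 1 / p) w) x = A2
      generalize hDn : p + (1 - p) * x = Dn at h1'
      have hp0' : p ≠ 0 := hp0.ne'
      cases c
      · have : 1 - x / Dn = p * (1 - x) / Dn := by
          rw [eq_div_iff h1', sub_mul, div_mul_cancel₀ _ h1']; linarith
        simp only [Bool.false_eq_true, if_false, one_mul]
        rw [this]; field_simp; ring
      · have : 1 - (1 - p) * (x / Dn) = p / Dn := by
          rw [eq_div_iff h1', sub_mul, mul_assoc, div_mul_cancel₀ _ h1']; linarith
        simp only [if_true, zero_mul, sub_zero, mul_one]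
        rw [this]; field_simp; ring
    obtain ⟨y, _, hy⟩ := exists_hasDerivAt_eq_slope H (fun _ => 0) hz hc hd
    have : H z = 0 := by
      rw [hH0, eq_div_iff (by linarith)] at hy; linarith
    simpa [hH, sub_eq_zero] using this

lemma Fs_tendsto (C : ℕ → ℝ) (hC : Summable (fun n => |C n|)) (τ : ℝ → ℝ)
    (h : Tendsto τ (𝓝[<] 1) (𝓝 1)) (hb : ∀ᶠ z in 𝓝[<] (1 : ℝ), |τ z| < 1) :
    Tendsto (fun z => Fs C (τ z)) (𝓝[<] 1) (𝓝 (∑' n, C n)) := by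
  refine tendsto_tsum_of_dominated_convergence hC (fun n => ?_) ?_
  · simpa using (h.pow n).const_mul (C n)
  · filter_upwards [hb] with z hz n
    rw [Real.norm_eq_abs, abs_mul, abs_pow]
    exact mul_le_of_le_one_right (abs_nonneg _) (pow_le_one₀ (abs_nonneg _) hz.le)

lemma main_tsum (a p : ℝ) (hp : p ∈ Set.Icc (1 / 2 : ℝ) (3 / 2)) (ha : |a| ≤ 1)
    (he : |1 - p + a * p| ≤ 1) (hb : |1 - 1 / p| ≤ 1) (w : List Bool) :
    ∑' n, Cf (1 - p) (1 - p + a * p) (true :: w) n =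
      ∑' n, Cf 0 a (true :: w) n - ∑' n, Cf 0 (1 - 1 / p) (true :: w) n := by
  have hq : |1 - p| ≤ 1 / 2 := abs_le.2 ⟨by linarith [hp.2], by linarith [hp.1]⟩
  have h00 : |(0 : ℝ)| ≤ 1 / 2 := by norm_num
  have hev : ∀ᶠ z in 𝓝[<] (1 : ℝ), 0 ≤ z ∧ z < 1 := by
    filter_upwards [Ioo_mem_nhdsLT (show (0 : ℝ) < 1 by norm_num)] with z hz
    exact ⟨hz.1.le, hz.2⟩
  have hid : Tendsto (fun z : ℝ => z) (𝓝[<] 1) (𝓝 1) := tendsto_id.mono_left nhdsWithin_le_nhds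
  have hτ : Tendsto (fun z : ℝ => z / (p + (1 - p) * z)) (𝓝[<] 1) (𝓝 1) := by
    have := hid.div ((hid.const_mul (1 - p)).const_add p) (by ring_nf; norm_num)
    refine (this.congr fun z => rfl).trans (by simp)
  have hz : ∀ᶠ z in 𝓝[<] (1 : ℝ), |z| < 1 := by
    filter_upwards [hev] with z hz
    rw [abs_of_nonneg hz.1]; exact hz.2
  have t1 := Fs_tendsto _ (Cf_summable (1 - p) (1 - p + a * p) hq he w) _ hτ (by
    filter_upwards [hev] with z hz
    exact (tau_facts p hp z hz.1 hz.2).2)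
  have t2 := Fs_tendsto _ (Cf_summable 0 a h00 ha w) _ hid hz
  have t3 := Fs_tendsto _ (Cf_summable 0 (1 - 1 / p) h00 hb w) _ hid hz
  refine tendsto_nhds_unique t1 ((t2.sub t3).congr' ?_)
  filter_upwards [hev] with z hz
  exact (main_interior a p hp ha he hb (true :: w) z hz.1 hz.2).symm

/-- truncated sums -/
noncomputable def Tr : List ℕ → List ℝ → ℕ → ℝ
  | [], _, _ => 1
  | s :: ss, x, N => ∑ n ∈ Icc 1 N, x.getD 0 0 ^ n / (n : ℝ) ^ s * Tr ss x.tail n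

def Sfin : (k : ℕ) → ℕ → Finset (Fin k → ℕ)
  | 0, _ => Finset.univ
  | k + 1, N => (Icc 1 N).biUnion fun n => (Sfin k n).image (Fin.cons n)

lemma mem_Sfin (k N : ℕ) (f : Fin k → ℕ) :
    f ∈ Sfin k N ↔ ((∀ i j : Fin k, i ≤ j → f j ≤ f i) ∧ ∀ i, 1 ≤ f i) ∧ ∀ i, f i ≤ N := by
  induction k generalizing N with
  | zero => simp [Sfin, eq_iff_true_of_subsingleton]
  | succ k ih =>
    simp only [Sfin, Finset.mem_biUnion, Finset.mem_image, ih, Finset.mem_Icc]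
    constructor
    · rintro ⟨n, hn, g, ⟨⟨h1, h2⟩, h3⟩, rfl⟩
      refine ⟨⟨?_, ?_⟩, ?_⟩
      · intro i j
        refine Fin.cases ?_ (fun i => ?_) i <;> refine Fin.cases ?_ (fun j => ?_) j
        · simp
        · intro _; simpa using h3 j
        · intro h; simp at h
        · intro h; simpa using h1 i j (by simpa using h)
      · intro i; refine Fin.cases ?_ (fun i => ?_) i
        · simpa using hn.1
        · simpa using h2 i
      · intro i; refine Fin.cases ?_ (fun i => ?_) i
        · simpa using hn.2
        · simpa using (h3 i).trans hn.2
    · rintro ⟨⟨h1, h2⟩, h3⟩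
      exact ⟨f 0, ⟨h2 0, h3 0⟩, Fin.tail f, ⟨⟨fun i j h => h1 _ _ (by simpa using h), fun i => h2 _⟩,
        fun i => h1 _ _ (Fin.zero_le _)⟩, Fin.cons_self_tail f⟩

lemma Sfin_sum (s : List ℕ) (x : List ℝ) (N : ℕ) :
    ∑ f ∈ Sfin s.length N, ∏ i : Fin s.length, x.getD (i : ℕ) 0 ^ f i / (f i : ℝ) ^ s.get i
      = Tr s x N := by
  induction s generalizing x N with
  | nil => simp [Sfin, Tr]
  | cons a s ih =>
    simp only [List.length_cons, Sfin, Tr]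
    rw [Finset.sum_biUnion]
    · refine Finset.sum_congr rfl fun n _ => ?_
      rw [Finset.sum_image (by
        intro f _ g _ h; exact Fin.cons_right_injective (α := fun _ => ℕ) n h), ← ih, Finset.mul_sum]
      refine Finset.sum_congr rfl fun f _ => ?_
      rw [Fin.prod_univ_succ]
      simp
    · intro n _ n' _ hne
      rw [Function.onFun, Finset.disjoint_left]
      intro f hf hf'
      obtain ⟨g, _, rfl⟩ := Finset.mem_image.1 hf
      obtain ⟨g', _, h⟩ := Finset.mem_image.1 hf'
      exact hne (by simpa using (congrFun h 0).symm)

lemma LiStar_tendsto (s : List ℕ) (x : List ℝ) (C : ℝ)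
    (h : ∀ N, Tr s (x.map abs) N ≤ C) :
    Tendsto (fun N => Tr s x N) atTop (𝓝 (LiStar s x)) := by
  classical
  set I := {m : Fin s.length → ℕ //
    (∀ i j : Fin s.length, i ≤ j → m j ≤ m i) ∧ ∀ i, 1 ≤ m i} with hI
  set f : (Fin s.length → ℕ) → ℝ :=
    fun m => ∏ i : Fin s.length, x.getD (i : ℕ) 0 ^ m i / (m i : ℝ) ^ s.get i with hf
  have habs : ∀ m, |f m| = ∏ i : Fin s.length,
      (x.map abs).getD (i : ℕ) 0 ^ m i / (m i : ℝ) ^ s.get i := by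
    intro m
    simp only [hf]
    rw [Finset.abs_prod]
    refine Finset.prod_congr rfl fun i _ => ?_
    rw [abs_div, abs_pow, abs_pow, Nat.abs_cast]
    congr 2
    have := List.getD_map (l := x) (n := (i : ℕ)) (d := (0 : ℝ)) (f := abs)
    rw [abs_zero] at this
    exact this.symm
  have hsumm : Summable (fun m : I => f m.1) := by
    refine Summable.of_abs (summable_of_sum_le (c := C) (fun _ => abs_nonneg _) fun u => ?_)
    set N := u.sup (fun m => Finset.univ.sup m.1) with hN
    refine le_trans ?_ (h N)
    rw [← Sfin_sum]
    simp only [← habs]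
    rw [← Finset.sum_image (s := u) (g := fun m : I => m.1) (f := fun m => |f m|)
      (fun a _ b _ h => Subtype.ext h)]
    refine Finset.sum_le_sum_of_subset_of_nonneg (fun m hm => ?_) (fun _ _ _ => abs_nonneg _)
    obtain ⟨m, hmu, rfl⟩ := Finset.mem_image.1 hm
    rw [mem_Sfin]
    refine ⟨m.2, fun i => ?_⟩
    exact (Finset.le_sup (f := m.1) (Finset.mem_univ i)).trans
      (Finset.le_sup (f := fun m : I => Finset.univ.sup m.1) hmu)
  have hs : HasSum (fun m : I => f m.1) (LiStar s x) := hsumm.hasSum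
  set φ : ℕ → Finset I := fun N => (Sfin s.length N).subtype _ with hφ
  have hmono : Tendsto φ atTop atTop := by
    refine tendsto_atTop_finset_of_monotone ?_ ?_
    · intro N M hNM m hm
      refine Finset.mem_subtype.2 ((mem_Sfin _ _ _).2 ?_)
      replace hm := (mem_Sfin _ _ _).1 (Finset.mem_subtype.1 hm)
      exact ⟨hm.1, fun i => (hm.2 i).trans hNM⟩
    · intro m
      refine ⟨Finset.univ.sup m.1, ?_⟩
      refine Finset.mem_subtype.2 ((mem_Sfin _ _ _).2 ?_)
      exact ⟨m.2, fun i => Finset.le_sup (f := m.1) (Finset.mem_univ i)⟩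
  refine (Tendsto.comp hs hmono).congr fun N => ?_
  rw [← Sfin_sum]
  simp only [Function.comp, hφ]
  exact Finset.sum_subtype_of_mem f (fun m hm => ((mem_Sfin _ _ _).1 hm).1)

lemma LiStar_eq (s : List ℕ) (x : List ℝ) (D D' : ℕ → ℝ) (h : ∀ N, Tr s x N = ∑ n ∈ Icc 1 N, D n)
    (h' : ∀ N, Tr s (x.map abs) N = ∑ n ∈ Icc 1 N, D' n) (h0 : D 0 = 0)
    (hD : Summable (fun n => |D n|)) (hD' : Summable (fun n => |D' n|)) :
    LiStar s x = ∑' n, D n := by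
  have h1 := LiStar_tendsto s x (∑' n, |D' n|) (fun N => by
    rw [h']
    exact (Finset.sum_le_sum fun n _ => le_abs_self _).trans
      (hD'.sum_le_tsum _ (fun _ _ => abs_nonneg _)))
  have h2 := (hD.of_abs.hasSum.tendsto_sum_nat).comp (tendsto_add_atTop_nat 1)
  refine tendsto_nhds_unique h1 (h2.congr fun N => ?_)
  rw [h, Function.comp]
  induction N with
  | zero => simp [h0]
  | succ N ih => rw [Finset.sum_range_succ, ih, Finset.sum_Icc_succ_top (by omega)]

def wordOf : List ℕ → List Bool
  | [] => []
  | [s] => List.replicate (s - 1) true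
  | s :: t :: l => List.replicate (s - 1) true ++ false :: wordOf (t :: l)

noncomputable def xL (q e : ℝ) : ℝ → List Bool → List ℝ
  | π, [] => [e / π]
  | π, true :: w => (q / π) :: xL q e q w
  | π, false :: w => (1 / π) :: xL q e 1 w

lemma xL_abs (q e π : ℝ) (w : List Bool) : (xL q e π w).map abs = xL |q| |e| |π| w := by
  induction w generalizing π with
  | nil => simp [xL, abs_div]
  | cons c w ih => cases c <;> simp [xL, abs_div, ih]

lemma Tr_xL (q e π : ℝ) (hq : q ≠ 0) (hπ : π ≠ 0) (w : List Bool) (N : ℕ) :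
    Tr (List.replicate (w.length + 1) 1) (xL q e π w) N =
      ∑ n ∈ Icc 1 N, (1 / π) ^ n * Cf q e w n := by
  induction w generalizing π N with
  | nil =>
    simp only [List.length_nil, xL, Tr, Cf, List.replicate]
    refine Finset.sum_congr rfl fun n _ => ?_
    simp [div_pow]; ring
  | cons c w ih =>
    have key : ∀ r : ℝ, r ≠ 0 → ∀ n : ℕ, (r / π) ^ n / (n : ℝ) ^ 1 *
        ∑ k ∈ Icc 1 n, (1 / r) ^ k * Cf q e w k = (1 / π) ^ n * Op r (Cf q e w) n := by
      intro r hr n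
      unfold Op
      have : ∑ k ∈ Icc 1 n, r ^ (n - k) * Cf q e w k =
          r ^ n * ∑ k ∈ Icc 1 n, (1 / r) ^ k * Cf q e w k := by
        rw [Finset.mul_sum]
        refine Finset.sum_congr rfl fun k hk => ?_
        rw [pow_sub₀ _ hr (Finset.mem_Icc.1 hk).2, one_div, inv_pow]; ring
      rw [this, div_pow, div_pow]; ring
    rw [List.length_cons, List.replicate_succ]
    cases c
    · simp only [xL, Tr, Cf, List.tail_cons, List.getD_cons_zero]
      refine Finset.sum_congr rfl fun n _ => ?_
      rw [ih 1 one_ne_zero, key 1 one_ne_zero]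
    · simp only [xL, Tr, Cf, List.tail_cons, List.getD_cons_zero]
      refine Finset.sum_congr rfl fun n _ => ?_
      rw [ih q hq, key q hq]

lemma Op_zero (C : ℕ → ℝ) (n : ℕ) (hn : 1 ≤ n) : Op 0 C n = C n / n := by
  unfold Op
  rw [Finset.sum_eq_single n]
  · simp
  · intro k hk hkn
    have := (Finset.mem_Icc.1 hk).2
    rw [zero_pow (by omega), zero_mul]
  · intro h; exact absurd (Finset.mem_Icc.2 ⟨hn, le_rfl⟩) h

lemma Cf_rep (a : ℝ) (j : ℕ) (w : List Bool) (n : ℕ) (hn : 1 ≤ n) :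
    Cf 0 a (List.replicate j true ++ w) n = Cf 0 a w n / (n : ℝ) ^ j := by
  induction j with
  | zero => simp
  | succ j ih =>
    simp only [List.replicate_succ, List.cons_append, Cf]
    rw [Op_zero _ _ hn, ih, div_div, pow_succ]

lemma Tr_s (a : ℝ) (s : List ℕ) (hs : s ≠ []) (h1 : ∀ i ∈ s, 1 ≤ i) (N : ℕ) :
    Tr s (List.replicate (s.length - 1) (1 : ℝ) ++ [a]) N =
      ∑ n ∈ Icc 1 N, Cf 0 a (wordOf s) n := by
  induction s generalizing N with
  | nil => exact absurd rfl hs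
  | cons s l ih =>
    have hs1 : 1 ≤ s := h1 s (by simp)
    obtain ⟨j, rfl⟩ : ∃ j, s = j + 1 := ⟨s - 1, by omega⟩
    rcases l with _ | ⟨t, l⟩
    · simp only [Tr, wordOf]
      refine Finset.sum_congr rfl fun n hn => ?_
      have := Cf_rep a j [] n (Finset.mem_Icc.1 hn).1
      rw [List.append_nil] at this
      simp only [Nat.add_sub_cancel]
      rw [this]
      simp [Cf, pow_succ, div_div]; ring
    · have ih' := ih (by simp) (fun i hi => h1 i (by simp [hi]))
      have e : List.replicate (((j + 1) :: t :: l).length - 1) (1 : ℝ) ++ [a] =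
          1 :: (List.replicate ((t :: l).length - 1) (1 : ℝ) ++ [a]) := by
        simp [List.replicate_succ]
      rw [e, Tr, wordOf]
      refine Finset.sum_congr rfl fun n hn => ?_
      simp only [Nat.add_sub_cancel, List.tail_cons, List.getD_cons_zero]
      rw [ih', Cf_rep a j _ n (Finset.mem_Icc.1 hn).1]
      simp only [Cf, Op, one_pow, one_mul]
      rw [pow_succ]; ring

lemma wordOf_length (s : List ℕ) (hs : s ≠ []) (h1 : ∀ i ∈ s, 1 ≤ i) :
    (wordOf s).length + 1 = s.sum := by
  induction s with
  | nil => exact absurd rfl hs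
  | cons s l ih =>
    have hs1 : 1 ≤ s := h1 s (by simp)
    rcases l with _ | ⟨t, l⟩
    · simp [wordOf]; omega
    · have ih' := ih (by simp) (fun i hi => h1 i (by simp [hi]))
      rw [wordOf, List.sum_cons, ← ih']
      simp; omega

lemma wordOf_cons (s : ℕ) (l : List ℕ) (hl : l ≠ []) :
    wordOf (s :: l) = List.replicate (s - 1) true ++ false :: wordOf l := by
  rcases l with _ | ⟨t, l⟩
  · exact absurd rfl hl
  · rfl

lemma wordOf_ones (k : ℕ) (l : List ℕ) (hl : l ≠ []) :
    wordOf (List.replicate k 1 ++ l) = List.replicate k false ++ wordOf l := by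
  induction k with
  | zero => simp
  | succ k ih =>
    rw [List.replicate_succ, List.cons_append, wordOf_cons _ _ (by simp [hl]), ih]
    simp [List.replicate_succ]

lemma xL_true (q e : ℝ) (hq : q ≠ 0) (k : ℕ) (w : List Bool) :
    xL q e q (List.replicate k true ++ w) = List.replicate k 1 ++ xL q e q w := by
  induction k with
  | zero => simp
  | succ k ih => simp [List.replicate_succ, xL, ih, hq]

lemma xL_false (q e : ℝ) (k : ℕ) (w : List Bool) :
    xL q e 1 (List.replicate k false ++ w) = List.replicate k 1 ++ xL q e 1 w := by
  induction k with
  | zero => simp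
  | succ k ih => simp [List.replicate_succ, xL, ih]

lemma sTup_succ (d : ℕ) (m : Fin (d + 1 + 1) → ℕ) (u : Fin (d + 1) → ℕ) :
    sTup (d + 1) m u = (m 0 + 2) :: (List.replicate (u 0) 1 ++
      sTup d (fun i => m i.succ) (fun i => u i.succ)) := by
  simp [sTup, List.ofFn_succ]

lemma sTup_ne (d : ℕ) (m : Fin (d + 1) → ℕ) (u : Fin d → ℕ) : sTup d m u ≠ [] := by
  simp [sTup]

lemma sTup_pos (d : ℕ) (m : Fin (d + 1) → ℕ) (u : Fin d → ℕ) : ∀ i ∈ sTup d m u, 1 ≤ i := by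
  induction d with
  | zero => simp [sTup]
  | succ d ih =>
    intro i hi
    rw [sTup_succ] at hi
    simp only [List.mem_cons, List.mem_append, List.mem_replicate] at hi
    rcases hi with h | h | h
    · omega
    · omega
    · exact ih _ _ i h

lemma word_head (d : ℕ) (m : Fin (d + 1) → ℕ) (u : Fin d → ℕ) :
    ∃ w, wordOf (sTup d m u) = true :: w := by
  cases d with
  | zero => exact ⟨List.replicate (m 0) true, by simp [sTup, wordOf, List.replicate_succ]⟩
  | succ d =>
    rw [sTup_succ, wordOf_cons _ _ (by simp [sTup_ne])]
    simp [List.replicate_succ]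

lemma xL_word (p e : ℝ) (hq : 1 - p ≠ 0) (d : ℕ) (m : Fin (d + 1) → ℕ) (u : Fin d → ℕ) :
    xL (1 - p) e 1 (wordOf (sTup d m u)) = xPre d m u p ++
          (1 - p) :: (List.replicate (m (Fin.last d)) (1 : ℝ) ++ [e / (1 - p)]) := by
  induction d with
  | zero =>
    have : wordOf (sTup 0 m u) = true :: (List.replicate (m 0) true ++ []) := by
      simp [sTup, wordOf, List.replicate_succ]
    rw [this, xL, xL_true _ _ hq]
    simp [xL, xPre]
  | succ d ih =>
    rw [sTup_succ, wordOf_cons _ _ (by simp [sTup_ne]), wordOf_ones _ _ (sTup_ne _ _ _)]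
    have : m 0 + 2 - 1 = m 0 + 1 := by omega
    rw [this, List.replicate_succ, List.cons_append, xL, xL_true _ _ hq, xL, xL_false, ih]
    simp [xPre, List.ofFn_succ]

/-- Depth-reduction formula (Corollary 3.2, second identity). -/
theorem stmt_16 (d : ℕ) (m : Fin (d + 1) → ℕ) (u : Fin d → ℕ) (a p : ℝ)
    (hA : a ∈ Set.Icc (-1 : ℝ) (1 / 3)) (hp : p ∈ Set.Icc (1 / 2 : ℝ) (3 / 2))
    (hp1 : p ≠ 1) (ha : |a| ≤ min 1 (2 / p - 1)) :
    LiStar (List.replicate (sTup d m u).sum 1)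
        (xPre d m u p ++
          (1 - p) :: (List.replicate (m (Fin.last d)) (1 : ℝ) ++ [1 + a * p / (1 - p)])) =
      LiStar (sTup d m u) (List.replicate ((sTup d m u).length - 1) (1 : ℝ) ++ [a]) -
        LiStar (sTup d m u)
          (List.replicate ((sTup d m u).length - 1) (1 : ℝ) ++ [1 - 1 / p]) := by
  have hq0 : 1 - p ≠ 0 := sub_ne_zero.2 hp1.symm
  have hp0 : 0 < p := by linarith [hp.1]
  have ha1 : |a| ≤ 1 := ha.trans (min_le_left _ _)
  have ha2 : |a| ≤ 2 / p - 1 := ha.trans (min_le_right _ _)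
  have hq : |1 - p| ≤ 1 / 2 := abs_le.2 ⟨by linarith [hp.2], by linarith [hp.1]⟩
  have h00 : |(0 : ℝ)| ≤ 1 / 2 := by norm_num
  have he : |1 - p + a * p| ≤ 1 := by
    have h3 : |a| * p ≤ 2 - p := by
      have := mul_le_mul_of_nonneg_right ha2 hp0.le
      rwa [sub_mul, div_mul_cancel₀ _ hp0.ne', one_mul] at this
    have := neg_abs_le a
    have := le_abs_self a
    rw [abs_le]; constructor <;> nlinarith
  have hb : |1 - 1 / p| ≤ 1 := by
    have h1 : 1 / p ≤ 2 := by rw [div_le_iff₀ hp0]; linarith [hp.1]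
    have h2 : 0 < 1 / p := by positivity
    rw [abs_le]; constructor <;> linarith
  obtain ⟨w, hw⟩ := word_head d m u
  have hR : ∀ c : ℝ, |c| ≤ 1 →
      LiStar (sTup d m u) (List.replicate ((sTup d m u).length - 1) (1 : ℝ) ++ [c]) =
        ∑' n, Cf 0 c (true :: w) n := by
    intro c hc
    refine LiStar_eq _ _ _ (Cf 0 |c| (true :: w)) ?_ ?_ (Cf_zero _ _ _)
      (Cf_summable 0 c h00 hc w) (Cf_summable 0 |c| h00 (by simpa using hc) w)
    · intro N
      rw [Tr_s c _ (sTup_ne _ _ _) (sTup_pos _ _ _), hw]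
    · intro N
      rw [← hw, ← Tr_s |c| _ (sTup_ne _ _ _) (sTup_pos _ _ _)]
      simp
  rw [hR a ha1, hR _ hb, ← main_tsum a p hp ha1 he hb w]
  have hy : 1 + a * p / (1 - p) = (1 - p + a * p) / (1 - p) := by
    field_simp
  rw [hy, ← xL_word p _ hq0, ← wordOf_length _ (sTup_ne _ _ _) (sTup_pos _ _ _)]
  refine LiStar_eq _ _ _ (Cf |1 - p| |1 - p + a * p| (true :: w)) ?_ ?_ (Cf_zero _ _ _)
    (Cf_summable _ _ hq he w)
    (Cf_summable _ _ (by simpa using hq) (by simpa using he) w)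
  · intro N
    rw [Tr_xL _ _ 1 hq0 one_ne_zero, hw]; simp
  · intro N
    rw [xL_abs, abs_one, Tr_xL _ _ 1 (abs_ne_zero.2 hq0) one_ne_zero, hw]; simp
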